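/- Let f = (f^1,…,f^m) : ℝ^n → ℝ^m be a C² map. Then at every point of ℝ^n, Σ over i,j,k,l,α,β of M_{ji} M_{kl} U^{αβ} (f_{ij}^β f_{kl}^α − f_{ik}^β f_{lj}^α) equals Σ over i,k,α,β,ν,μ,θ,γ of U^{αν} U^{βμ} U^{θγ} ⟨Df^μ, Df_i^γ⟩ ⟨Df^ν, Df_k^θ⟩ F_{ik}^{βα}, where M_{ij} = δ_{ij} − g^{ij} and F_{ik}^{βα} = f_i^β f_k^α − f_k^β f_i^α. -/

import Mathlib

open MeasureTheory Filter Matrix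
open scoped Topology

noncomputable section

/-- Partial derivative ∂φ/∂x_i. -/
def pd {n : ℕ} (φ : EuclideanSpace ℝ (Fin n) → ℝ) (i : Fin n)
    (x : EuclideanSpace ℝ (Fin n)) : ℝ :=
  fderiv ℝ φ x (EuclideanSpace.single i 1)

/-- Second partial derivative ∂²φ/∂x_i∂x_j. -/
def pd2 {n : ℕ} (φ : EuclideanSpace ℝ (Fin n) → ℝ) (i j : Fin n)
    (x : EuclideanSpace ℝ (Fin n)) : ℝ :=
  pd (pd φ j) i x

/-- Induced metric of the graph of `f`: g_{ij} = δ_{ij} + f_i^α f_j^α. -/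
def gmat {n m : ℕ} (f : Fin m → EuclideanSpace ℝ (Fin n) → ℝ)
    (x : EuclideanSpace ℝ (Fin n)) : Matrix (Fin n) (Fin n) ℝ :=
  Matrix.of fun i j => (if i = j then (1:ℝ) else 0) + ∑ α, pd (f α) i x * pd (f α) j x

/-- Gram matrix of the normal frame: U_{αβ} = δ_{αβ} + ⟨Df^α, Df^β⟩. -/
def Umat {n m : ℕ} (f : Fin m → EuclideanSpace ℝ (Fin n) → ℝ)
    (x : EuclideanSpace ℝ (Fin n)) : Matrix (Fin m) (Fin m) ℝ :=
  Matrix.of fun α β => (if α = β then (1:ℝ) else 0) + ∑ i, pd (f α) i x * pd (f β) i x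

/-- Scalar curvature of the graph of `f`:
S = g^{ij} g^{kl} U^{αβ} (f_{ij}^β f_{kl}^α − f_{ik}^β f_{jl}^α). -/
def Sc {n m : ℕ} (f : Fin m → EuclideanSpace ℝ (Fin n) → ℝ)
    (x : EuclideanSpace ℝ (Fin n)) : ℝ :=
  ∑ i, ∑ j, ∑ k, ∑ l, ∑ α, ∑ β,
    (gmat f x)⁻¹ i j * (gmat f x)⁻¹ k l * (Umat f x)⁻¹ α β *
      (pd2 (f β) i j x * pd2 (f α) k l x - pd2 (f β) i k x * pd2 (f α) j l x)

/-- Contraction S^⊥ of the normal curvature tensor of the graph of `f`: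
S^⊥ = U^{αγ} U^{βμ} (⟨Df_k^γ, Df_i^μ⟩ + U^{θν} ⟨Df_i^μ, Df^ν⟩ ⟨Df_k^γ, Df^θ⟩)
        (f_i^α f_k^β − f_i^β f_k^α). -/
def Sperp {n m : ℕ} (f : Fin m → EuclideanSpace ℝ (Fin n) → ℝ)
    (x : EuclideanSpace ℝ (Fin n)) : ℝ :=
  ∑ i, ∑ k, ∑ α, ∑ β, ∑ γ, ∑ μ,
    (Umat f x)⁻¹ α γ * (Umat f x)⁻¹ β μ *
      ((∑ l, pd2 (f γ) k l x * pd2 (f μ) i l x) +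
        ∑ θ, ∑ ν, (Umat f x)⁻¹ θ ν * (∑ l, pd2 (f μ) i l x * pd (f ν) l x) *
          (∑ l, pd2 (f γ) k l x * pd (f θ) l x)) *
      (pd (f α) i x * pd (f β) k x - pd (f β) i x * pd (f α) k x)

/-- ω_{n−1}: the (n−1)-dimensional (Hausdorff) volume of the unit sphere in ℝ^n. -/
def sphereVol (n : ℕ) : ℝ :=
  (μH[(n:ℝ) - 1] (Metric.sphere (0 : EuclideanSpace ℝ (Fin n)) 1)).toReal

/-- The ADM mass integrand (∂_i g_{ij} − ∂_j g_{ii}) (x_j/r), summed over i, j. -/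
def admIntegrand {n m : ℕ} (f : Fin m → EuclideanSpace ℝ (Fin n) → ℝ) (r : ℝ)
    (x : EuclideanSpace ℝ (Fin n)) : ℝ :=
  ∑ i, ∑ j, (pd (fun y => gmat f y i j) i x - pd (fun y => gmat f y i i) j x) * (x j / r)

/-- M_{ij} = δ_{ij} − g^{ij}. -/
def Mmat {n m : ℕ} (f : Fin m → EuclideanSpace ℝ (Fin n) → ℝ)
    (x : EuclideanSpace ℝ (Fin n)) (i j : Fin n) : ℝ :=
  (if i = j then (1:ℝ) else 0) - (gmat f x)⁻¹ i j

/-!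
With `A = Df` the Jacobian, `g = 1 + Aᵀ A` and `U = 1 + A Aᵀ`, so the Woodbury identity gives
`1 - g⁻¹ = Aᵀ U⁻¹ A`; call this matrix `M`. Writing `H γ` for the Hessian of `f^γ`, both sides are
`∑ U^{θγ} (tr (H γ M) tr (H θ M) - tr (H γ M H θ M))`. On the left this is read off directly, and on
the right it follows from `(U⁻¹ (A (H γ)ᵀ))ᵀ A = H γ M`.
-/

section FiniteSums

variable {ι₁ ι₂ ι₃ ι₄ ι₅ ι₆ S : Type*} [Fintype ι₁] [Fintype ι₂] [Fintype ι₃] [Fintype ι₄]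
  [Fintype ι₅] [Fintype ι₆] [AddCommMonoid S]

lemma sum_comm_two_two (F : ι₁ → ι₂ → ι₃ → ι₄ → S) :
    ∑ a, ∑ b, ∑ c, ∑ d, F a b c d = ∑ c, ∑ d, ∑ a, ∑ b, F a b c d := by
  simpa only [Fintype.sum_prod_type] using
    Finset.sum_comm (s := Finset.univ) (t := Finset.univ)
      (f := fun (p : ι₁ × ι₂) (q : ι₃ × ι₄) => F p.1 p.2 q.1 q.2)

lemma sum_comm_four_two (F : ι₁ → ι₂ → ι₃ → ι₄ → ι₅ → ι₆ → S) :
    ∑ a, ∑ b, ∑ c, ∑ d, ∑ p, ∑ q, F a b c d p q =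
      ∑ p, ∑ q, ∑ a, ∑ b, ∑ c, ∑ d, F a b c d p q :=
  calc
    _ = ∑ a, ∑ b, ∑ p, ∑ q, ∑ c, ∑ d, F a b c d p q :=
      Fintype.sum_congr _ _ fun a => Fintype.sum_congr _ _ fun b => sum_comm_two_two (F a b)
    _ = _ := sum_comm_two_two _

end FiniteSums

section MatrixIdentities

variable {R ι κ : Type*} [CommRing R] [Fintype ι] [Fintype κ]

lemma one_sub_inv_one_add_mul [DecidableEq ι] [DecidableEq κ] (A : Matrix ι κ R)
    (B : Matrix κ ι R) (hAB : IsUnit (1 + A * B)) :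
    1 - (1 + B * A)⁻¹ = B * (1 + A * B)⁻¹ * A := by
  have woodbury := add_mul_mul_inv_eq_sub (A := (1 : Matrix κ κ R)) (U := B)
    (C := (1 : Matrix ι ι R)) (V := A) isUnit_one isUnit_one (by simpa using hAB)
  simp only [inv_one, Matrix.mul_one, Matrix.one_mul] at woodbury
  rw [woodbury, sub_sub_cancel]

lemma isUnit_one_add_mul_transpose [DecidableEq ι] (A : Matrix ι κ ℝ) : IsUnit (1 + A * Aᵀ) := by
  have hA : (A * Aᵀ).PosSemidef := by
    simpa only [conjTranspose_eq_transpose_of_trivial] using posSemidef_self_mul_conjTranspose A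
  exact (PosDef.one.add_posSemidef hA).isUnit

lemma isSymm_inv_one_add_mul_transpose [DecidableEq ι] (A : Matrix ι κ R) :
    ((1 + A * Aᵀ)⁻¹).IsSymm := by
  rw [IsSymm, transpose_nonsing_inv, transpose_add, transpose_one, transpose_mul,
    transpose_transpose]

lemma trace_mul_trace_sub_trace_mul (X Y : Matrix κ κ R) :
    X.trace * Y.trace - (X * Y).trace = ∑ i, ∑ k, (X i i * Y k k - X i k * Y k i) := by
  simp only [trace, diag_apply, mul_apply, Finset.sum_mul_sum, Finset.sum_sub_distrib]

lemma sum_contract_mul_sub_mul (M X Y : Matrix κ κ R) :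
    ∑ i, ∑ j, ∑ k, ∑ l, M j i * M k l * (X i j * Y k l - X i k * Y l j) =
      (X * M).trace * (Y * Mᵀ).trace - (X * M * (Y * M)).trace := by
  have h_traces : ∑ i, ∑ j, ∑ k, ∑ l, M j i * M k l * (X i j * Y k l) =
      (X * M).trace * (Y * Mᵀ).trace := by
    simp only [trace, diag_apply, mul_apply, transpose_apply, Finset.sum_mul]
    simp only [Finset.mul_sum]
    iterate 4 refine Fintype.sum_congr _ _ fun _ => ?_
    ring
  have h_trace : ∑ i, ∑ j, ∑ k, ∑ l, M j i * M k l * (X i k * Y l j) =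
      (X * M * (Y * M)).trace := by
    rw [show X * M * (Y * M) = X * (M * Y) * M by simp only [Matrix.mul_assoc]]
    simp only [trace, diag_apply, mul_apply, Finset.mul_sum, Finset.sum_mul]
    iterate 4 refine Fintype.sum_congr _ _ fun _ => ?_
    ring
  simp only [mul_sub, Finset.sum_sub_distrib, h_traces, h_trace]

lemma sum_mul_minor (A B C : Matrix ι κ R) :
    ∑ i, ∑ k, ∑ α, ∑ β, B β i * C α k * (A β i * A α k - A β k * A α i) =
      (Bᵀ * A).trace * (Cᵀ * A).trace - (Bᵀ * A * (Cᵀ * A)).trace := by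
  rw [trace_mul_trace_sub_trace_mul]
  refine Fintype.sum_congr _ _ fun i => Fintype.sum_congr _ _ fun k => ?_
  simp only [mul_apply, transpose_apply, Finset.sum_mul_sum, ← Finset.sum_sub_distrib]
  rw [Finset.sum_comm]
  iterate 2 refine Fintype.sum_congr _ _ fun _ => ?_
  ring

lemma transpose_mul_mul_transpose_mul {V : Matrix ι ι R} (hV : V.IsSymm) (A : Matrix ι κ R)
    (X : Matrix κ κ R) : (V * (A * Xᵀ))ᵀ * A = X * (Aᵀ * V * A) := by
  simp only [transpose_mul, transpose_transpose, hV.eq, Matrix.mul_assoc]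

lemma sum_contract_hessian_eq_sum_trace (V : Matrix ι ι R) {M : Matrix κ κ R} (hM : M.IsSymm)
    (H : ι → Matrix κ κ R) :
    ∑ i, ∑ j, ∑ k, ∑ l, ∑ α, ∑ β, M j i * M k l * V α β *
        (H β i j * H α k l - H β i k * H α l j) =
      ∑ θ, ∑ γ, V θ γ *
        ((H γ * M).trace * (H θ * M).trace - (H γ * M * (H θ * M)).trace) := by
  rw [sum_comm_four_two]
  refine Fintype.sum_congr _ _ fun θ => Fintype.sum_congr _ _ fun γ => ?_
  have h_contract := sum_contract_mul_sub_mul M (H γ) (H θ)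
  rw [hM.eq] at h_contract
  simp only [← h_contract, Finset.mul_sum]
  iterate 4 refine Fintype.sum_congr _ _ fun _ => ?_
  ring

lemma sum_contract_minor_eq_sum_trace {V : Matrix ι ι R} (hV : V.IsSymm) (A : Matrix ι κ R)
    (H : ι → Matrix κ κ R) :
    ∑ i, ∑ k, ∑ α, ∑ β, ∑ ν, ∑ μ, ∑ θ, ∑ γ,
        V α ν * V β μ * V θ γ * (∑ l, A μ l * H γ i l) * (∑ l, A ν l * H θ k l) *
          (A β i * A α k - A β k * A α i) =
      ∑ θ, ∑ γ, V θ γ *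
        ((H γ * (Aᵀ * V * A)).trace * (H θ * (Aᵀ * V * A)).trace -
          (H γ * (Aᵀ * V * A) * (H θ * (Aᵀ * V * A))).trace) := by
  let W (γ : ι) : Matrix ι κ R := V * (A * (H γ)ᵀ)
  have hW (γ β : ι) (i : κ) : W γ β i = ∑ μ, V β μ * ∑ l, A μ l * H γ i l := rfl
  calc
    _ = ∑ i, ∑ k, ∑ α, ∑ β, ∑ θ, ∑ γ,
          V θ γ * (W γ β i * W θ α k * (A β i * A α k - A β k * A α i)) := by
      refine Fintype.sum_congr _ _ fun i => Fintype.sum_congr _ _ fun k =>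
        Fintype.sum_congr _ _ fun α => Fintype.sum_congr _ _ fun β => ?_
      rw [sum_comm_two_two]
      refine Fintype.sum_congr _ _ fun θ => Fintype.sum_congr _ _ fun γ => ?_
      rw [hW, hW, mul_comm (∑ μ, _) (∑ ν, _), Finset.sum_mul_sum]
      simp only [Finset.sum_mul _ _ (A β i * A α k - A β k * A α i), Finset.mul_sum _ _ (V θ γ)]
      iterate 2 refine Fintype.sum_congr _ _ fun _ => ?_
      ring
    _ = ∑ θ, ∑ γ, V θ γ * (((W γ)ᵀ * A).trace * ((W θ)ᵀ * A).trace -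
          ((W γ)ᵀ * A * ((W θ)ᵀ * A)).trace) := by
      rw [sum_comm_four_two]
      simp only [← sum_mul_minor, Finset.mul_sum]
    _ = _ := by simp only [W, transpose_mul_mul_transpose_mul hV]

theorem lemma_2_3_iv_general [DecidableEq ι] [DecidableEq κ] (A : Matrix ι κ R)
    (H : ι → Matrix κ κ R) {M : Matrix κ κ R} {V : Matrix ι ι R} (hU : IsUnit (1 + A * Aᵀ))
    (hM : M = 1 - (1 + Aᵀ * A)⁻¹) (hV : V = (1 + A * Aᵀ)⁻¹) :
    ∑ i, ∑ j, ∑ k, ∑ l, ∑ α, ∑ β, M j i * M k l * V α β *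
        (H β i j * H α k l - H β i k * H α l j) =
      ∑ i, ∑ k, ∑ α, ∑ β, ∑ ν, ∑ μ, ∑ θ, ∑ γ,
        V α ν * V β μ * V θ γ * (∑ l, A μ l * H γ i l) * (∑ l, A ν l * H θ k l) *
          (A β i * A α k - A β k * A α i) := by
  have hV_symm : V.IsSymm := hV ▸ isSymm_inv_one_add_mul_transpose A
  have hM_eq : M = Aᵀ * V * A := by rw [hM, hV, one_sub_inv_one_add_mul A Aᵀ hU]
  have hM_symm : M.IsSymm := by
    simp only [hM_eq, IsSymm, transpose_mul, transpose_transpose, hV_symm.eq, Matrix.mul_assoc]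
  rw [sum_contract_hessian_eq_sum_trace V hM_symm, sum_contract_minor_eq_sum_trace hV_symm, hM_eq]

end MatrixIdentities

section Graph

variable {n m : ℕ} (f : Fin m → EuclideanSpace ℝ (Fin n) → ℝ) (x : EuclideanSpace ℝ (Fin n))

/-- The Jacobian matrix `(f_i^α)` of `f`, with rows indexed by the components `α` of `f`;
the matrices `gmat` and `Umat` are `1` plus its two Gram matrices. -/
def jacobian : Matrix (Fin m) (Fin n) ℝ :=
  Matrix.of fun α i => pd (f α) i x

/-- The Hessian matrix `(f_{ij}^α)` of the component `f^α`, in the index order of `pd2`, packaging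
the second derivatives for matrix algebra. -/
def hessian (α : Fin m) : Matrix (Fin n) (Fin n) ℝ :=
  Matrix.of fun i j => pd2 (f α) i j x

lemma gmat_eq_one_add : gmat f x = 1 + (jacobian f x)ᵀ * jacobian f x := by
  ext i j
  simp [gmat, jacobian, mul_apply, one_apply]

lemma Umat_eq_one_add : Umat f x = 1 + jacobian f x * (jacobian f x)ᵀ := by
  ext α β
  simp [Umat, jacobian, mul_apply, one_apply]

lemma of_Mmat_eq_one_sub : Matrix.of (Mmat f x) = 1 - (1 + (jacobian f x)ᵀ * jacobian f x)⁻¹ := by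
  ext i j
  simp [Mmat, gmat_eq_one_add, one_apply]

end Graph

/-- Lemma 2.3(iv): pointwise,
Σ_{i,j,k,l,α,β} M_{ji} M_{kl} U^{αβ} (f_{ij}^β f_{kl}^α − f_{ik}^β f_{lj}^α)
 = Σ_{i,k,α,β,ν,μ,θ,γ} U^{αν} U^{βμ} U^{θγ} ⟨Df^μ, Df_i^γ⟩ ⟨Df^ν, Df_k^θ⟩ F_{ik}^{βα}. -/
theorem lemma_2_3_iv (n m : ℕ) (f : Fin m → EuclideanSpace ℝ (Fin n) → ℝ)
    (hf : ∀ α, ContDiff ℝ 2 (f α)) :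
    ∀ x : EuclideanSpace ℝ (Fin n),
      (∑ i, ∑ j, ∑ k, ∑ l, ∑ α, ∑ β, Mmat f x j i * Mmat f x k l * (Umat f x)⁻¹ α β *
          (pd2 (f β) i j x * pd2 (f α) k l x - pd2 (f β) i k x * pd2 (f α) l j x)) =
      ∑ i, ∑ k, ∑ α, ∑ β, ∑ ν, ∑ μ, ∑ θ, ∑ γ,
        (Umat f x)⁻¹ α ν * (Umat f x)⁻¹ β μ * (Umat f x)⁻¹ θ γ *
          (∑ l, pd (f μ) l x * pd2 (f γ) i l x) * (∑ l, pd (f ν) l x * pd2 (f θ) k l x) *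
          (pd (f β) i x * pd (f α) k x - pd (f β) k x * pd (f α) i x) := by
  intro x
  exact lemma_2_3_iv_general (jacobian f x) (hessian f x) (isUnit_one_add_mul_transpose _)
    (of_Mmat_eq_one_sub f x) (congrArg Inv.inv (Umat_eq_one_add f x))
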